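/- Let n be a natural number, let P_f and P_b be n×n real symmetric positive definite matrices, and let W be any n×n real matrix. Then W·P_f·Wᵀ + (I − W)·P_b·(I − W)ᵀ − (P_f⁻¹ + P_b⁻¹)⁻¹ is positive semidefinite; moreover equality (i.e., the difference is zero) holds when W = P_b·(P_f + P_b)⁻¹. -/

import Mathlib

/-!
Complete the square in the weight: with `S = Pf + Pb` and `K = Pb * S⁻¹`, the combined covariance
exceeds `K * Pf` by `(W - K) * S * (W - K)ᵀ`, and `K * Pf` is exactly `(Pf⁻¹ + Pb⁻¹)⁻¹`.
-/

open Matrix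

/-- The optimal weight is given by `k * (a + b) = b` rather than as `b * (a + b)⁻¹`, so that the
square can be completed in any star ring. -/
theorem weighted_star_sandwich_sub_eq {R : Type*} [Ring R] [StarRing R] {a b k : R}
    (ha : IsSelfAdjoint a) (hb : IsSelfAdjoint b) (hk : k * (a + b) = b) (w : R) :
    w * a * star w + (1 - w) * b * star (1 - w) - k * a =
      (w - k) * (a + b) * star (w - k) := by
  have hk_star : (a + b) * star k = b := by
    simpa only [star_mul, (ha.add hb).star_eq, hb.star_eq] using congrArg star hk
  have hka : b - k * a = k * b := by rw [sub_eq_iff_eq_add', ← mul_add, hk]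
  calc w * a * star w + (1 - w) * b * star (1 - w) - k * a
      = w * (a + b) * star w - w * b - b * star w + (b - k * a) := by
        rw [star_sub, star_one]
        noncomm_ring
    _ = w * (a + b) * star w - w * ((a + b) * star k) - k * (a + b) * star w
          + k * ((a + b) * star k) := by rw [hk_star, hk, hka]
    _ = (w - k) * (a + b) * star (w - k) := by
        rw [star_sub]
        noncomm_ring

section Matrix

variable {ι R : Type*} [Fintype ι] [DecidableEq ι] [CommRing R] {A B : Matrix ι ι R}

theorem nonsing_inv_inv_add_inv (hA : IsUnit A) (hB : IsUnit B) :
    (A⁻¹ + B⁻¹)⁻¹ = B * (A + B)⁻¹ * A := by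
  rw [Matrix.inv_add_inv (iff_of_true hA hB), Matrix.mul_inv_rev, Matrix.mul_inv_rev,
    nonsing_inv_nonsing_inv A ((isUnit_iff_isUnit_det A).mp hA),
    nonsing_inv_nonsing_inv B ((isUnit_iff_isUnit_det B).mp hB), mul_assoc]

theorem weighted_conjTranspose_sandwich_sub_inv_inv_add_inv [StarRing R]
    (hA : IsUnit A) (hB : IsUnit B) (hAB : IsUnit (A + B))
    (hA_herm : A.IsHermitian) (hB_herm : B.IsHermitian) (W : Matrix ι ι R) :
    W * A * Wᴴ + (1 - W) * B * (1 - W)ᴴ - (A⁻¹ + B⁻¹)⁻¹ =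
      (W - B * (A + B)⁻¹) * (A + B) * (W - B * (A + B)⁻¹)ᴴ := by
  rw [nonsing_inv_inv_add_inv hA hB]
  exact weighted_star_sandwich_sub_eq hA_herm.isSelfAdjoint hB_herm.isSelfAdjoint
    (nonsing_inv_mul_cancel_right _ B ((isUnit_iff_isUnit_det _).mp hAB)) W

theorem stmt_6_general [PartialOrder R] [StarRing R] (hA : IsUnit A) (hB : IsUnit B)
    (hAB : IsUnit (A + B)) (hB_herm : B.IsHermitian) (hAB_psd : (A + B).PosSemidef)
    (W : Matrix ι ι R) :
    (W * A * Wᴴ + (1 - W) * B * (1 - W)ᴴ - (A⁻¹ + B⁻¹)⁻¹).PosSemidef ∧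
      (W = B * (A + B)⁻¹ →
        W * A * Wᴴ + (1 - W) * B * (1 - W)ᴴ - (A⁻¹ + B⁻¹)⁻¹ = 0) := by
  have hA_herm : A.IsHermitian := by
    simpa only [add_sub_cancel_right] using hAB_psd.isHermitian.sub hB_herm
  rw [weighted_conjTranspose_sandwich_sub_inv_inv_add_inv hA hB hAB hA_herm hB_herm]
  refine ⟨hAB_psd.mul_mul_conjTranspose_same _, fun hW => ?_⟩
  rw [sub_eq_zero.mpr hW, zero_mul, zero_mul]

end Matrix

theorem stmt_6 (n : ℕ) (Pf Pb W : Matrix (Fin n) (Fin n) ℝ)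
    (hPf : Pf.PosDef) (hPb : Pb.PosDef) :
    (W * Pf * Wᵀ + (1 - W) * Pb * (1 - W)ᵀ - (Pf⁻¹ + Pb⁻¹)⁻¹).PosSemidef ∧
    (W = Pb * (Pf + Pb)⁻¹ →
      W * Pf * Wᵀ + (1 - W) * Pb * (1 - W)ᵀ - (Pf⁻¹ + Pb⁻¹)⁻¹ = 0) := by
  have hS := hPf.add hPb
  simpa only [conjTranspose_eq_transpose_of_trivial] using
    stmt_6_general hPf.isUnit hPb.isUnit hS.isUnit hPb.isHermitian hS.posSemidef W
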